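/- arXiv:2206.00503 — 2 statements merged into one kernel-verified Lean document; each statement's English description precedes it below -/
import Mathlib

section
/- Let h ≥ 1 and 1 ≤ r₁ ≤ r₂ ≤ … ≤ r_h be integers and let 𝒜, ℬ be the canonical matrices associated to the partition (r₁,…,r_h). For every (a,b) ∈ ℂ² with (a,b) ≠ (0,0) and every vector v ∈ ℂ^{N+1} (coordinates indexed by pairs (i,p), 1 ≤ i ≤ h, 0 ≤ p ≤ 2rᵢ) lying in the kernel of a•𝒜 + b•ℬ, one has v_{(i,p)} = 0 for every i and every 0 ≤ p ≤ rᵢ − 1. (That is, the vertices of all quadrics of the pencil are contained in a common fixed linear subspace of dimension N − r.) -/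
open Matrix

/-- Index type of the canonical pencil associated to the partition `rr`:
pairs `(i, p)` with `i : Fin h` and `0 ≤ p ≤ 2 rᵢ`. -/
abbrev PencilIdx (h : ℕ) (rr : Fin h → ℕ) := (i : Fin h) × Fin (2 * rr i + 1)

/-- The first canonical matrix `𝒜` of the pencil `L_{(r₁,…,r_h)}`. -/
def canA (h : ℕ) (rr : Fin h → ℕ) : Matrix (PencilIdx h rr) (PencilIdx h rr) ℂ :=
  Matrix.of fun u v =>
    if u.1 = v.1 ∧
        (((v.2 : ℕ) = (u.2 : ℕ) + rr u.1 ∧ (u.2 : ℕ) < rr u.1) ∨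
         ((u.2 : ℕ) = (v.2 : ℕ) + rr u.1 ∧ (v.2 : ℕ) < rr u.1)) then 1 else 0

/-- The second canonical matrix `ℬ` of the pencil `L_{(r₁,…,r_h)}`. -/
def canB (h : ℕ) (rr : Fin h → ℕ) : Matrix (PencilIdx h rr) (PencilIdx h rr) ℂ :=
  Matrix.of fun u v =>
    if u.1 = v.1 ∧
        (((v.2 : ℕ) = (u.2 : ℕ) + rr u.1 + 1 ∧ (u.2 : ℕ) < rr u.1) ∨
         ((u.2 : ℕ) = (v.2 : ℕ) + rr u.1 + 1 ∧ (v.2 : ℕ) < rr u.1)) then 1 else 0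

/-!
In a single block of size `2r + 1`, row `r + k` of `(a𝒜 + bℬ)v`, for `0 ≤ k ≤ r`, is
`a vₖ + b vₖ₋₁` with `v₋₁` and `vᵣ` replaced by `0`. These `r + 1` numbers are the coefficients of
`(a + bX) ∑_{p < r} vₚ Xᵖ`. If they all vanish and `(a, b) ≠ (0, 0)`, then `∑_{p < r} vₚ Xᵖ = 0`,
because polynomials over a ring without zero divisors have no zero divisors.
-/

open Polynomial

theorem blockDiagonal'_mulVec_apply {ι R : Type*} {m n : ι → Type*} [Fintype ι] [DecidableEq ι]
    [∀ i, Fintype (n i)] [NonUnitalNonAssocSemiring R] (M : ∀ i, Matrix (m i) (n i) R)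
    (v : (Σ i, n i) → R) (i : ι) (p : m i) :
    (blockDiagonal' M *ᵥ v) ⟨i, p⟩ = (M i *ᵥ fun q => v ⟨i, q⟩) p := by
  simp only [mulVec, dotProduct, Fintype.sum_sigma]
  rw [Finset.sum_eq_single i]
  · simp only [blockDiagonal'_apply_eq]
  · intro j _ hji
    simp only [blockDiagonal'_apply_ne M _ _ hji.symm, zero_mul, Finset.sum_const_zero]
  · exact fun hi => absurd (Finset.mem_univ i) hi

/-- The diagonal blocks of the canonical pencil: `pencilBlock R r 0` is the block of `𝒜` and
`pencilBlock R r 1` the block of `ℬ` belonging to the part `r` of the partition. -/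
def pencilBlock (R : Type*) [Zero R] [One R] (r s : ℕ) :
    Matrix (Fin (2 * r + 1)) (Fin (2 * r + 1)) R :=
  Matrix.of fun p q =>
    if ((q : ℕ) = p + r + s ∧ (p : ℕ) < r) ∨ ((p : ℕ) = q + r + s ∧ (q : ℕ) < r) then 1 else 0

theorem canA_eq_blockDiagonal' (h : ℕ) (rr : Fin h → ℕ) :
    canA h rr = blockDiagonal' fun i => pencilBlock ℂ (rr i) 0 := by
  ext ⟨i, p⟩ ⟨j, q⟩
  obtain rfl | hij := eq_or_ne i j
  · simp [canA, pencilBlock]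
  · simp [canA, blockDiagonal'_apply_ne, hij]

theorem canB_eq_blockDiagonal' (h : ℕ) (rr : Fin h → ℕ) :
    canB h rr = blockDiagonal' fun i => pencilBlock ℂ (rr i) 1 := by
  ext ⟨i, p⟩ ⟨j, q⟩
  obtain rfl | hij := eq_or_ne i j
  · simp [canB, pencilBlock]
  · simp [canB, blockDiagonal'_apply_ne, hij]

section Block

variable {R : Type*} [Semiring R] {r : ℕ}

open scoped Classical in
/-- The generating polynomial `∑_{p < r} wₚ Xᵖ` of the first `r` coordinates of a vector indexed by
a block of the pencil. -/
noncomputable def initialPolynomial (w : Fin (2 * r + 1) → R) : R[X] :=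
  ofFn r fun p => w (p.castLE (by omega))

theorem coeff_initialPolynomial_of_lt (w : Fin (2 * r + 1) → R) {k : ℕ} (hk : k < r) :
    (initialPolynomial w).coeff k = w ⟨k, by omega⟩ := by
  classical exact ofFn_coeff_eq_val_of_lt _ hk

theorem coeff_initialPolynomial_of_le (w : Fin (2 * r + 1) → R) {k : ℕ} (hk : r ≤ k) :
    (initialPolynomial w).coeff k = 0 := by
  classical exact ofFn_coeff_eq_zero_of_ge _ hk

theorem pencilBlock_mulVec_eq_coeff (s : ℕ) (w : Fin (2 * r + 1) → R) {k : ℕ}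
    (hk : r + k < 2 * r + 1) :
    (pencilBlock R r s *ᵥ w) ⟨r + k, hk⟩ = (X ^ s * initialPolynomial w).coeff k := by
  have entry (q : Fin (2 * r + 1)) :
      pencilBlock R r s ⟨r + k, hk⟩ q = if k = q + s ∧ (q : ℕ) < r then 1 else 0 := by
    simp only [pencilBlock, of_apply]
    congr 1
    grind
  simp only [mulVec, dotProduct, entry, ite_mul, one_mul, zero_mul, coeff_X_pow_mul']
  by_cases hks : s ≤ k ∧ k - s < r
  · obtain ⟨hsk, hlt⟩ := hks
    rw [if_pos hsk, coeff_initialPolynomial_of_lt w hlt,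
      Finset.sum_eq_single ⟨k - s, by omega⟩ (by grind) (by simp), if_pos (by grind)]
  · rw [Finset.sum_eq_zero (by grind)]
    split_ifs with hsk
    · exact (coeff_initialPolynomial_of_le w (by omega)).symm
    · rfl

theorem linear_mul_initialPolynomial_eq_zero {a b : R} {w : Fin (2 * r + 1) → R}
    (hw : (a • pencilBlock R r 0 + b • pencilBlock R r 1) *ᵥ w = 0) :
    (C a + C b * X) * initialPolynomial w = 0 := by
  have expand : (C a + C b * X) * initialPolynomial w =
      C a * (X ^ 0 * initialPolynomial w) + C b * (X ^ 1 * initialPolynomial w) := by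
    simp only [add_mul, mul_assoc, pow_zero, pow_one, one_mul]
  ext k
  rw [expand, coeff_add, coeff_C_mul, coeff_C_mul, coeff_zero]
  obtain hkr | hrk := le_or_gt k r
  · have row : r + k < 2 * r + 1 := by omega
    rw [← pencilBlock_mulVec_eq_coeff 0 w row, ← pencilBlock_mulVec_eq_coeff 1 w row]
    simpa only [add_mulVec, smul_mulVec, Pi.add_apply, Pi.smul_apply, smul_eq_mul,
      Pi.zero_apply] using congrFun hw ⟨r + k, row⟩
  · simp only [coeff_X_pow_mul', coeff_initialPolynomial_of_le w (show r ≤ k - 0 by omega),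
      coeff_initialPolynomial_of_le w (show r ≤ k - 1 by omega), ite_self, mul_zero, add_zero]

theorem eq_zero_of_pencilBlock_mulVec_eq_zero [NoZeroDivisors R] {a b : R}
    (hab : ¬(a = 0 ∧ b = 0)) {w : Fin (2 * r + 1) → R}
    (hw : (a • pencilBlock R r 0 + b • pencilBlock R r 1) *ᵥ w = 0)
    (p : Fin (2 * r + 1)) (hp : (p : ℕ) < r) : w p = 0 := by
  have linear_ne_zero : C a + C b * X ≠ 0 := fun hzero =>
    hab ⟨by simpa using congrArg (coeff · 0) hzero, by simpa using congrArg (coeff · 1) hzero⟩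
  have poly_eq_zero : initialPolynomial w = 0 :=
    (mul_eq_zero.mp (linear_mul_initialPolynomial_eq_zero hw)).resolve_left linear_ne_zero
  rw [← coeff_initialPolynomial_of_lt w hp, poly_eq_zero, coeff_zero]

end Block

theorem canonical_pencil_kernels_in_common_subspace_general {ι R : Type*} [Fintype ι]
    [DecidableEq ι] [Semiring R] [NoZeroDivisors R] {r : ι → ℕ} {a b : R} (hab : ¬(a = 0 ∧ b = 0))
    {v : (Σ i, Fin (2 * r i + 1)) → R}
    (hv : (a • blockDiagonal' (fun i => pencilBlock R (r i) 0) +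
      b • blockDiagonal' (fun i => pencilBlock R (r i) 1)) *ᵥ v = 0)
    (u : Σ i, Fin (2 * r i + 1)) (hu : (u.2 : ℕ) < r u.1) : v u = 0 := by
  rw [← blockDiagonal'_smul, ← blockDiagonal'_smul, ← blockDiagonal'_add] at hv
  have block_eq_zero : (a • pencilBlock R (r u.1) 0 + b • pencilBlock R (r u.1) 1) *ᵥ
      (fun q => v ⟨u.1, q⟩) = 0 := by
    funext q
    have row := congrFun hv ⟨u.1, q⟩
    rwa [blockDiagonal'_mulVec_apply] at row
  exact eq_zero_of_pencilBlock_mulVec_eq_zero hab block_eq_zero u.2 hu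

/-- Every kernel vector of every member `a𝒜 + bℬ`, `(a,b) ≠ (0,0)`,
of the canonical pencil vanishes in all coordinates `(i, p)` with `p < rᵢ`; i.e. the
vertices of all quadrics of the pencil lie in a common linear subspace of dimension
`N − r`. -/
theorem canonical_pencil_kernels_in_common_subspace
    (h : ℕ) (hh : 1 ≤ h) (rr : Fin h → ℕ) (hmono : Monotone rr) (hpos : ∀ i, 1 ≤ rr i)
    (a b : ℂ) (hab : ¬(a = 0 ∧ b = 0))
    (v : PencilIdx h rr → ℂ)
    (hv : (a • canA h rr + b • canB h rr).mulVec v = 0) :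
    ∀ u : PencilIdx h rr, (u.2 : ℕ) < rr u.1 → v u = 0 := by
  rw [canA_eq_blockDiagonal', canB_eq_blockDiagonal'] at hv
  exact canonical_pencil_kernels_in_common_subspace_general hab hv
end

section
/- Let r ≥ 1 be an integer and let 𝒜, ℬ be the corank-one canonical matrices of size 2r+1. Then the ℂ-vector space 𝔤(𝒜,ℬ) of complex (2r+1)×(2r+1) matrices X such that both Xᵀ𝒜 + 𝒜X and Xᵀℬ + ℬX lie in the ℂ-linear span of {𝒜, ℬ} has dimension 5 over ℂ. -/
open Matrix

/-- The first corank-one canonical matrix `𝒜` of size `2r + 1`: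
`𝒜_{p, r+p} = 𝒜_{r+p, p} = 1` for `0 ≤ p ≤ r − 1`, all other entries `0`. -/
def corankOneA (r : ℕ) : Matrix (Fin (2 * r + 1)) (Fin (2 * r + 1)) ℂ :=
  Matrix.of fun p q =>
    if ((q : ℕ) = (p : ℕ) + r ∧ (p : ℕ) < r) ∨ ((p : ℕ) = (q : ℕ) + r ∧ (q : ℕ) < r)
    then 1 else 0

/-- The second corank-one canonical matrix `ℬ` of size `2r + 1`:
`ℬ_{p, r+p+1} = ℬ_{r+p+1, p} = 1` for `0 ≤ p ≤ r − 1`, all other entries `0`. -/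
def corankOneB (r : ℕ) : Matrix (Fin (2 * r + 1)) (Fin (2 * r + 1)) ℂ :=
  Matrix.of fun p q =>
    if ((q : ℕ) = (p : ℕ) + r + 1 ∧ (p : ℕ) < r) ∨ ((p : ℕ) = (q : ℕ) + r + 1 ∧ (q : ℕ) < r)
    then 1 else 0


/-- The ℂ-linear map `X ↦ XᵀM + MX`. -/
noncomputable def congrDeriv {n : Type*} [Fintype n] (M : Matrix n n ℂ) :
    Matrix n n ℂ →ₗ[ℂ] Matrix n n ℂ where
  toFun X := Xᵀ * M + M * X
  map_add' X Y := by
    simp only [Matrix.transpose_add, Matrix.add_mul, Matrix.mul_add]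
    abel
  map_smul' c X := by
    simp only [Matrix.transpose_smul, Matrix.smul_mul, Matrix.mul_smul, smul_add,
      RingHom.id_apply]

/-- The Lie algebra `𝔤(A,B)` of the stabilizer of the pencil spanned by `A` and `B`,
as a ℂ-subspace of the space of matrices: all `X` such that `XᵀA + AX` and
`XᵀB + BX` lie in the span of `{A, B}`. -/
noncomputable def stabAlg {n : Type*} [Fintype n] (A B : Matrix n n ℂ) :
    Submodule ℂ (Matrix n n ℂ) :=
  Submodule.comap (congrDeriv A) (Submodule.span ℂ {A, B}) ⊓
  Submodule.comap (congrDeriv B) (Submodule.span ℂ {A, B})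

/-!
Split `2r + 1 = r + (r + 1)`. The pencil consists of the matrices `[0, M; Mᵀ, 0]` with `M` in the
span of the Kronecker pair `I = [1 0]`, `T = [0 1]` of size `r × (r + 1)`, and the stabilizer
algebra is the preimage of (pencil × pencil) under `X ↦ (XᵀA + AX, XᵀB + BX)`.

In the divided power bases, `I` and `T` are the partial derivatives `∂/∂x` and `∂/∂y` from binary
forms of degree `r` to those of degree `r - 1`. The operators `x ∂/∂y`, `y ∂/∂x`, `y ∂/∂y` act on
their span by commutators, which together with the scalars gives all of `End(span {I, T})`; hence
the map hits every pair of elements of the pencil. Its kernel is the line through `diag(-1, 1)`: the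
off-diagonal blocks of a kernel element are Hankel matrices forced to vanish, and the lower diagonal
block is a Toeplitz matrix forced to be scalar. The dimension is therefore `2 · 2 + 1 = 5`.
-/

theorem finrank_comap_eq_of_le_range {K V W : Type*} [DivisionRing K] [AddCommGroup V] [Module K V]
    [FiniteDimensional K V] [AddCommGroup W] [Module K W] {f : V →ₗ[K] W} {N : Submodule K W}
    (hN : N ≤ LinearMap.range f) :
    Module.finrank K (N.comap f) =
      Module.finrank K N + Module.finrank K (LinearMap.ker f) := by
  have hrange : LinearMap.range (f.submoduleComap N) = ⊤ := by
    rw [LinearMap.range_eq_top]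
    rintro ⟨y, hy⟩
    obtain ⟨x, rfl⟩ := hN hy
    exact ⟨⟨x, hy⟩, rfl⟩
  have hker : LinearMap.ker (f.submoduleComap N) =
      (LinearMap.ker f).comap (N.comap f).subtype := by
    ext x
    simp [Subtype.ext_iff]
  have hle : LinearMap.ker f ≤ N.comap f := fun x hx => by simp_all
  rw [← LinearMap.finrank_range_add_finrank_ker (f.submoduleComap N), hrange, hker, finrank_top,
    (Submodule.comapSubtypeEquivOfLe hle).finrank_eq]

theorem finrank_submodule_prod {K V W : Type*} [DivisionRing K] [AddCommGroup V] [Module K V]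
    [AddCommGroup W] [Module K W] (p : Submodule K V) (q : Submodule K W) [FiniteDimensional K p]
    [FiniteDimensional K q] :
    Module.finrank K (p.prod q) = Module.finrank K p + Module.finrank K q := by
  have hrange : LinearMap.range (p.subtype.prodMap q.subtype) = p.prod q := by
    rw [LinearMap.range_prodMap, Submodule.range_subtype, Submodule.range_subtype]
  have hinj : Function.Injective (p.subtype.prodMap q.subtype) :=
    p.subtype_injective.prodMap q.subtype_injective
  rw [← hrange, LinearMap.finrank_range_of_inj hinj, Module.finrank_prod]

section ToeplitzHankel

variable {α : Type*} {m n : ℕ} {M : Matrix (Fin m) (Fin n) α}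

/-- A Toeplitz matrix: the entries are constant along each diagonal `i - j = const`, a condition
written additively to avoid truncated subtraction. -/
def IsToeplitz (M : Matrix (Fin m) (Fin n) α) : Prop :=
  ∀ ⦃i i' : Fin m⦄ ⦃j j' : Fin n⦄, (i : ℕ) + j' = i' + j → M i j = M i' j'

/-- A Hankel matrix: the entries are constant along each antidiagonal `i + j = const`. -/
def IsHankel (M : Matrix (Fin m) (Fin n) α) : Prop :=
  ∀ ⦃i i' : Fin m⦄ ⦃j j' : Fin n⦄, (i : ℕ) + j = i' + j' → M i j = M i' j'

theorem isToeplitz_of_forall_succ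
    (h : ∀ (i i' : Fin m) (j j' : Fin n), (i' : ℕ) = i + 1 → (j' : ℕ) = j + 1 → M i j = M i' j') :
    IsToeplitz M := by
  have shift (k : ℕ) : ∀ (i i' : Fin m) (j j' : Fin n), (i' : ℕ) = i + k → (j' : ℕ) = j + k →
      M i j = M i' j' := by
    induction k with
    | zero => exact fun i i' j j' hi hj => by rw [Fin.ext hi, Fin.ext hj]
    | succ k ih =>
      intro i i' j j' hi hj
      exact (ih i ⟨i + k, by omega⟩ j ⟨j + k, by omega⟩ rfl rfl).trans (h _ _ _ _ hi hj)
  intro i i' j j' hij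
  rcases le_total (i : ℕ) i' with hi | hi
  · exact shift (i' - i) i i' j j' (by omega) (by omega)
  · exact (shift (i - i') i' i j' j (by omega) (by omega)).symm

theorem isHankel_of_forall_succ
    (h : ∀ (i i' : Fin m) (j j' : Fin n), (i' : ℕ) = i + 1 → (j' : ℕ) = j + 1 → M i' j = M i j') :
    IsHankel M := by
  have hT : IsToeplitz (M.submatrix Fin.rev id) :=
    isToeplitz_of_forall_succ fun i i' j j' hi hj =>
      h _ _ j j' (by simp only [Fin.val_rev]; omega) hj
  intro i i' j j' hij
  simpa using hT (i := i.rev) (i' := i'.rev) (j := j) (j' := j')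
    (by simp only [Fin.val_rev]; omega)

end ToeplitzHankel

section KroneckerPair

variable {R l : Type*} (r : ℕ)

/-- The `r × (r + 1)` matrix `[1 0]`, which deletes the last coordinate of a vector (`Fin.init`).
With `tailMatrix` it spans the Kronecker pencil of minimal index `r`. -/
def initMatrix (R : Type*) [Zero R] [One R] (r : ℕ) : Matrix (Fin r) (Fin (r + 1)) R :=
  Matrix.of fun i j => if j = i.castSucc then 1 else 0

/-- The `r × (r + 1)` matrix `[0 1]`, which deletes the first coordinate of a vector
(`Fin.tail`). -/
def tailMatrix (R : Type*) [Zero R] [One R] (r : ℕ) : Matrix (Fin r) (Fin (r + 1)) R :=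
  Matrix.of fun i j => if j = i.succ then 1 else 0

variable {r} [NonAssocSemiring R]

@[simp]
theorem initMatrix_mul_apply (M : Matrix (Fin (r + 1)) l R) (i : Fin r) (j : l) :
    (initMatrix R r * M) i j = M i.castSucc j := by
  simp [initMatrix, Matrix.mul_apply]

@[simp]
theorem tailMatrix_mul_apply (M : Matrix (Fin (r + 1)) l R) (i : Fin r) (j : l) :
    (tailMatrix R r * M) i j = M i.succ j := by
  simp [tailMatrix, Matrix.mul_apply]

@[simp]
theorem mul_initMatrix_apply_castSucc (M : Matrix l (Fin r) R) (i : l) (j : Fin r) :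
    (M * initMatrix R r) i j.castSucc = M i j := by
  simp [initMatrix, Matrix.mul_apply]

@[simp]
theorem mul_initMatrix_apply_last (M : Matrix l (Fin r) R) (i : l) :
    (M * initMatrix R r) i (Fin.last r) = 0 := by
  simp [initMatrix, Matrix.mul_apply, (Fin.castSucc_ne_last _).symm]

@[simp]
theorem mul_tailMatrix_apply_succ (M : Matrix l (Fin r) R) (i : l) (j : Fin r) :
    (M * tailMatrix R r) i j.succ = M i j := by
  simp [tailMatrix, Matrix.mul_apply]

@[simp]
theorem mul_tailMatrix_apply_zero (M : Matrix l (Fin r) R) (i : l) :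
    (M * tailMatrix R r) i 0 = 0 := by
  simp [tailMatrix, Matrix.mul_apply, (Fin.succ_ne_zero _).symm]

end KroneckerPair

section SkewProducts

variable {R : Type*} {r : ℕ} [NonAssocRing R] {N : Matrix (Fin (r + 1)) (Fin r) R}

theorem isHankel_of_skew (hinit : ∀ i j : Fin r, N i.castSucc j = -N j.castSucc i)
    (htail : ∀ i j : Fin r, N i.succ j = -N j.succ i) : IsHankel N := by
  refine isHankel_of_forall_succ fun i i' j j' hi hj => ?_
  obtain ⟨k, rfl⟩ : ∃ k : Fin r, k.castSucc = i := ⟨⟨i, by omega⟩, rfl⟩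
  obtain rfl : k.succ = i' := Fin.ext hi.symm
  have hjj' : j.succ = j'.castSucc := Fin.ext hj.symm
  rw [htail, hjj', hinit, neg_neg]

theorem eq_zero_of_skew_left_mul [NoZeroDivisors R] [CharZero R]
    (hinit : (initMatrix R r * N)ᵀ = -(initMatrix R r * N))
    (htail : (tailMatrix R r * N)ᵀ = -(tailMatrix R r * N)) : N = 0 := by
  have hinit' (i j : Fin r) : N i.castSucc j = -N j.castSucc i := by
    simpa using congrFun₂ hinit j i
  have htail' (i j : Fin r) : N i.succ j = -N j.succ i := by
    simpa using congrFun₂ htail j i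
  have hN := isHankel_of_skew hinit' htail'
  ext i j
  -- Every antidiagonal of `N` meets the diagonal of one of the two skew-symmetric products.
  obtain ⟨k, hk | hk⟩ : ∃ k : Fin r, (i : ℕ) + j = k + k ∨ (i : ℕ) + j = k + 1 + k :=
    ⟨⟨(i + j) / 2, by omega⟩, by dsimp only; omega⟩
  · rw [hN (i' := k.castSucc) (j' := k) hk]
    exact CharZero.eq_neg_self_iff.mp (hinit' k k)
  · rw [hN (i' := k.succ) (j' := k) hk]
    exact CharZero.eq_neg_self_iff.mp (htail' k k)

theorem eq_zero_of_skew_mul_right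
    (hinit : (N * initMatrix R r)ᵀ = -(N * initMatrix R r))
    (htail : (N * tailMatrix R r)ᵀ = -(N * tailMatrix R r)) : N = 0 := by
  have hN : IsHankel N := isHankel_of_skew
    (fun i j => by simpa using congrFun₂ hinit j.castSucc i.castSucc)
    (fun i j => by simpa using congrFun₂ htail j.succ i.succ)
  have hlast (j : Fin r) : N (Fin.last r) j = 0 := by
    simpa using congrFun₂ hinit j.castSucc (Fin.last r)
  have hzero (j : Fin r) : N 0 j = 0 := by
    simpa using congrFun₂ htail j.succ 0
  ext i j
  rcases lt_or_ge ((i : ℕ) + j) r with hij | hij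
  · rw [hN (i' := 0) (j' := ⟨i + j, hij⟩) (by simp), hzero, Matrix.zero_apply]
  · rw [hN (i' := Fin.last r) (j' := ⟨i + j - r, by omega⟩) (by simp only [Fin.val_last]; omega),
      hlast, Matrix.zero_apply]

end SkewProducts

section KroneckerStabilizer

variable {R : Type*} {r : ℕ} [NonAssocRing R]

theorem exists_eq_smul_one_of_mul_add_mul_eq_zero
    {P : Matrix (Fin r) (Fin r) R} {S : Matrix (Fin (r + 1)) (Fin (r + 1)) R}
    (hinit : P * initMatrix R r + initMatrix R r * S = 0)
    (htail : P * tailMatrix R r + tailMatrix R r * S = 0) :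
    ∃ s : R, P = -(s • 1) ∧ S = s • 1 := by
  have hP (i j : Fin r) : P i j = -S i.castSucc j.castSucc :=
    eq_neg_of_add_eq_zero_left (by simpa using congrFun₂ hinit i j.castSucc)
  have hS : IsToeplitz S := by
    refine isToeplitz_of_forall_succ fun i i' j j' hi hj => ?_
    obtain ⟨k, rfl⟩ : ∃ k : Fin r, k.castSucc = i := ⟨⟨i, by omega⟩, rfl⟩
    obtain ⟨k', rfl⟩ : ∃ k' : Fin r, k'.castSucc = j := ⟨⟨j, by omega⟩, rfl⟩
    obtain rfl : k.succ = i' := Fin.ext hi.symm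
    obtain rfl : k'.succ = j' := Fin.ext hj.symm
    have hsucc : P k k' = -S k.succ k'.succ :=
      eq_neg_of_add_eq_zero_left (by simpa using congrFun₂ htail k k'.succ)
    exact neg_injective ((hP k k').symm.trans hsucc)
  have hlast (i : Fin r) : S i.castSucc (Fin.last r) = 0 := by
    simpa using congrFun₂ hinit i (Fin.last r)
  have hzero (i : Fin r) : S i.succ 0 = 0 := by
    simpa using congrFun₂ htail i 0
  have hS_scalar : S = S 0 0 • 1 := by
    ext i j
    rcases lt_trichotomy i j with hij | rfl | hij
    · have hdiag : S i j = S (Fin.castSucc ⟨i + r - j, by omega⟩) (Fin.last r) :=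
        hS (by simp only [Fin.val_castSucc, Fin.val_last]; omega)
      rw [hdiag, hlast, Matrix.smul_apply, Matrix.one_apply_ne hij.ne, smul_zero]
    · simpa using hS (i := i) (i' := 0) (j := i) (j' := 0) (add_comm _ _)
    · have hdiag : S i j = S (Fin.succ ⟨i - j - 1, by omega⟩) 0 :=
        hS (by simp only [Fin.val_succ, Fin.val_zero]; omega)
      rw [hdiag, hzero, Matrix.smul_apply, Matrix.one_apply_ne hij.ne', smul_zero]
  refine ⟨S 0 0, ?_, hS_scalar⟩
  ext i j
  rw [hP, hS_scalar]
  simp [Matrix.one_apply]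

end KroneckerStabilizer

section BinaryForms

/-- The matrix of `x ∂/∂y` on binary forms of degree `n - 1`, in the basis of divided powers
`e_j = x^(n-1-j) y^j / ((n-1-j)! j!)`. In these bases `initMatrix` is `∂/∂x` and `tailMatrix` is
`∂/∂y`. -/
def raisingMatrix (R : Type*) [NonAssocRing R] (n : ℕ) : Matrix (Fin n) (Fin n) R :=
  Matrix.of fun i j => if (j : ℕ) = i + 1 then (n : R) - (j : ℕ) else 0

/-- The matrix of `y ∂/∂x` in the divided power basis of `raisingMatrix`. -/
def loweringMatrix (R : Type*) [NonAssocSemiring R] (n : ℕ) : Matrix (Fin n) (Fin n) R :=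
  Matrix.of fun i j => if (i : ℕ) = j + 1 then (i : ℕ) else 0

/-- The matrix of `y ∂/∂y` in the divided power basis of `raisingMatrix`. -/
def weightMatrix (R : Type*) [NonAssocSemiring R] (n : ℕ) : Matrix (Fin n) (Fin n) R :=
  Matrix.of fun i j => if i = j then (i : ℕ) else 0

variable (R : Type*) (r : ℕ)

theorem initMatrix_mul_raisingMatrix [NonAssocRing R] :
    initMatrix R r * raisingMatrix R (r + 1) =
      raisingMatrix R r * initMatrix R r + tailMatrix R r := by
  ext i j
  cases j using Fin.lastCases with
  | last => simp [raisingMatrix, tailMatrix, Fin.ext_iff]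
  | cast j =>
    by_cases hij : (j : ℕ) = i + 1 <;>
      simp [raisingMatrix, tailMatrix, Fin.ext_iff, hij, sub_add_eq_add_sub]

theorem tailMatrix_mul_raisingMatrix [NonAssocRing R] :
    tailMatrix R r * raisingMatrix R (r + 1) = raisingMatrix R r * tailMatrix R r := by
  ext i j
  cases j using Fin.cases <;> simp [raisingMatrix]

theorem initMatrix_mul_loweringMatrix [NonAssocSemiring R] :
    initMatrix R r * loweringMatrix R (r + 1) = loweringMatrix R r * initMatrix R r := by
  ext i j
  cases j using Fin.lastCases with
  | last =>
    have hi : (i : ℕ) ≠ r + 1 := by omega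
    simp [loweringMatrix, hi]
  | cast j => simp [loweringMatrix]

theorem tailMatrix_mul_loweringMatrix [NonAssocSemiring R] :
    tailMatrix R r * loweringMatrix R (r + 1) =
      loweringMatrix R r * tailMatrix R r + initMatrix R r := by
  ext i j
  cases j using Fin.cases with
  | zero =>
    by_cases hi : (i : ℕ) = 0 <;> simp [loweringMatrix, initMatrix, Fin.ext_iff, hi, eq_comm]
  | succ j =>
    by_cases hij : (i : ℕ) = j + 1 <;>
      simp [loweringMatrix, initMatrix, Fin.ext_iff, hij, eq_comm (a := (j : ℕ) + 1)]

theorem initMatrix_mul_weightMatrix [NonAssocSemiring R] :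
    initMatrix R r * weightMatrix R (r + 1) = weightMatrix R r * initMatrix R r := by
  ext i j
  cases j using Fin.lastCases <;> simp [weightMatrix]

theorem tailMatrix_mul_weightMatrix [NonAssocSemiring R] :
    tailMatrix R r * weightMatrix R (r + 1) =
      weightMatrix R r * tailMatrix R r + tailMatrix R r := by
  ext i j
  rw [Matrix.add_apply, tailMatrix_mul_apply]
  cases j using Fin.cases with
  | zero =>
    rw [mul_tailMatrix_apply_zero]
    simp [weightMatrix, tailMatrix, (Fin.succ_ne_zero i).symm]
  | succ j =>
    rw [mul_tailMatrix_apply_succ]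
    by_cases hij : i = j <;> simp [weightMatrix, tailMatrix, hij, eq_comm (a := j)]

end BinaryForms

theorem exists_mul_add_mul_eq_smul_add_smul {R : Type*} [CommRing R] {r : ℕ} (a b c d : R) :
    ∃ (P : Matrix (Fin r) (Fin r) R) (S : Matrix (Fin (r + 1)) (Fin (r + 1)) R),
      P * initMatrix R r + initMatrix R r * S = a • initMatrix R r + b • tailMatrix R r ∧
      P * tailMatrix R r + tailMatrix R r * S = c • initMatrix R r + d • tailMatrix R r := by
  refine ⟨a • 1 - (b • raisingMatrix R r + c • loweringMatrix R r + (d - a) • weightMatrix R r),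
    b • raisingMatrix R (r + 1) + c • loweringMatrix R (r + 1) +
      (d - a) • weightMatrix R (r + 1), ?_, ?_⟩
  · simp only [Matrix.sub_mul, Matrix.add_mul, Matrix.mul_add, Matrix.smul_mul, Matrix.mul_smul,
      Matrix.one_mul, initMatrix_mul_raisingMatrix, initMatrix_mul_loweringMatrix,
      initMatrix_mul_weightMatrix]
    module
  · simp only [Matrix.sub_mul, Matrix.add_mul, Matrix.mul_add, Matrix.smul_mul, Matrix.mul_smul,
      Matrix.one_mul, tailMatrix_mul_raisingMatrix, tailMatrix_mul_loweringMatrix,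
      tailMatrix_mul_weightMatrix]
    module

section Stabilizer

variable {m n : Type*} [Fintype m] [Fintype n]

theorem congrDeriv_apply (M X : Matrix n n ℂ) : congrDeriv M X = Xᵀ * M + M * X := rfl

theorem congrDeriv_reindex (e : m ≃ n) (M X : Matrix m m ℂ) :
    congrDeriv (Matrix.reindex e e M) (Matrix.reindex e e X) =
      Matrix.reindex e e (congrDeriv M X) := by
  simp [congrDeriv_apply, Matrix.submatrix_add]

theorem finrank_stabAlg_reindex (e : m ≃ n) (A B : Matrix m m ℂ) :
    Module.finrank ℂ (stabAlg (Matrix.reindex e e A) (Matrix.reindex e e B)) =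
      Module.finrank ℂ (stabAlg A B) := by
  let φ := Matrix.reindexLinearEquiv ℂ ℂ e e
  have hspan : (Submodule.span ℂ {φ A, φ B}).comap φ.toLinearMap = Submodule.span ℂ {A, B} := by
    have hmap : (Submodule.span ℂ {A, B}).map φ.toLinearMap = Submodule.span ℂ {φ A, φ B} := by
      rw [Submodule.map_span, Set.image_pair, LinearEquiv.coe_coe]
    rw [← hmap, Submodule.comap_map_eq_of_injective φ.injective]
  have hstab : (stabAlg (φ A) (φ B)).comap φ.toLinearMap = stabAlg A B := by
    ext X
    have hφ (M : Matrix m m ℂ) : congrDeriv (φ M) (φ X) = φ (congrDeriv M X) :=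
      congrDeriv_reindex e M X
    simp [stabAlg, ← hspan, hφ]
  rw [← hstab]
  exact (φ.ofSubmodule' _).finrank_eq.symm

/-- The derivative at the identity of the congruence action on the pair `(A, B)`. Its kernel is the
Lie algebra of the common isometry group of `A` and `B`. -/
noncomputable def congrDerivPair (A B : Matrix n n ℂ) :
    Matrix n n ℂ →ₗ[ℂ] Matrix n n ℂ × Matrix n n ℂ :=
  (congrDeriv A).prod (congrDeriv B)

theorem congrDerivPair_apply (A B X : Matrix n n ℂ) :
    congrDerivPair A B X = (congrDeriv A X, congrDeriv B X) := rfl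

theorem finrank_stabAlg_eq_add {A B : Matrix n n ℂ}
    (h : (Submodule.span ℂ {A, B}).prod (Submodule.span ℂ {A, B}) ≤
      LinearMap.range (congrDerivPair A B)) :
    Module.finrank ℂ (stabAlg A B) =
      2 * Module.finrank ℂ (Submodule.span ℂ {A, B}) +
        Module.finrank ℂ (LinearMap.ker (congrDerivPair A B)) := by
  have hstab : stabAlg A B =
      ((Submodule.span ℂ {A, B}).prod (Submodule.span ℂ {A, B})).comap (congrDerivPair A B) := rfl
  rw [hstab, finrank_comap_eq_of_le_range h, finrank_submodule_prod, two_mul]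

end Stabilizer

section Symmetrization

variable {m n : Type*}

/-- The symmetric block matrix `[0, M; Mᵀ, 0]`. -/
def symmetrization {R : Type*} [Zero R] (M : Matrix m n R) : Matrix (m ⊕ n) (m ⊕ n) R :=
  Matrix.fromBlocks 0 M Mᵀ 0

theorem smul_symmetrization_add_smul_symmetrization {R : Type*} [Semiring R] (a b : R)
    (M N : Matrix m n R) :
    a • symmetrization M + b • symmetrization N = symmetrization (a • M + b • N) := by
  simp [symmetrization, Matrix.fromBlocks_smul, Matrix.fromBlocks_add]

theorem congrDeriv_symmetrization [Fintype m] [Fintype n] (M : Matrix m n ℂ) (P : Matrix m m ℂ)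
    (Q : Matrix m n ℂ) (N : Matrix n m ℂ) (S : Matrix n n ℂ) :
    congrDeriv (symmetrization M) (Matrix.fromBlocks P Q N S) =
      Matrix.fromBlocks ((M * N)ᵀ + M * N) (Pᵀ * M + M * S)
        (Pᵀ * M + M * S)ᵀ ((Qᵀ * M)ᵀ + Qᵀ * M) := by
  simp [congrDeriv_apply, symmetrization, Matrix.fromBlocks_transpose, Matrix.fromBlocks_multiply,
    Matrix.fromBlocks_add, add_comm]

theorem congrDeriv_symmetrization_fromBlocks_diagonal [Fintype m] [Fintype n] (M : Matrix m n ℂ)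
    (P : Matrix m m ℂ) (S : Matrix n n ℂ) :
    congrDeriv (symmetrization M) (Matrix.fromBlocks Pᵀ 0 0 S) =
      symmetrization (P * M + M * S) := by
  rw [congrDeriv_symmetrization]
  simp [symmetrization]

theorem congrDeriv_symmetrization_eq_zero_iff [Fintype m] [Fintype n] {M : Matrix m n ℂ}
    {P : Matrix m m ℂ} {Q : Matrix m n ℂ} {N : Matrix n m ℂ} {S : Matrix n n ℂ} :
    congrDeriv (symmetrization M) (Matrix.fromBlocks P Q N S) = 0 ↔
      (M * N)ᵀ = -(M * N) ∧ (Qᵀ * M)ᵀ = -(Qᵀ * M) ∧ Pᵀ * M + M * S = 0 := by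
  rw [congrDeriv_symmetrization, ← Matrix.fromBlocks_zero, Matrix.fromBlocks_inj,
    ← add_eq_zero_iff_eq_neg, ← add_eq_zero_iff_eq_neg, Matrix.transpose_eq_zero]
  tauto

end Symmetrization

section CorankOne

variable {r : ℕ}

theorem span_prod_span_le_range_congrDerivPair_symmetrization :
    (Submodule.span ℂ {symmetrization (initMatrix ℂ r), symmetrization (tailMatrix ℂ r)}).prod
        (Submodule.span ℂ {symmetrization (initMatrix ℂ r), symmetrization (tailMatrix ℂ r)}) ≤
      LinearMap.range (congrDerivPair (symmetrization (initMatrix ℂ r))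
        (symmetrization (tailMatrix ℂ r))) := by
  rintro ⟨Y, Z⟩ ⟨hY, hZ⟩
  obtain ⟨a, b, rfl⟩ := Submodule.mem_span_pair.mp hY
  obtain ⟨c, d, rfl⟩ := Submodule.mem_span_pair.mp hZ
  obtain ⟨P, S, hinit, htail⟩ := exists_mul_add_mul_eq_smul_add_smul (r := r) a b c d
  refine ⟨Matrix.fromBlocks Pᵀ 0 0 S, ?_⟩
  rw [congrDerivPair_apply, congrDeriv_symmetrization_fromBlocks_diagonal,
    congrDeriv_symmetrization_fromBlocks_diagonal, hinit, htail,
    smul_symmetrization_add_smul_symmetrization, smul_symmetrization_add_smul_symmetrization]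

theorem ker_congrDerivPair_symmetrization :
    LinearMap.ker (congrDerivPair (symmetrization (initMatrix ℂ r))
        (symmetrization (tailMatrix ℂ r))) =
      Submodule.span ℂ {Matrix.fromBlocks (-1) 0 0 1} := by
  ext X
  obtain ⟨P, Q, N, S, rfl⟩ : ∃ P Q N S, X = Matrix.fromBlocks P Q N S :=
    ⟨_, _, _, _, (Matrix.fromBlocks_toBlocks X).symm⟩
  simp only [LinearMap.mem_ker, congrDerivPair_apply, Prod.mk_eq_zero,
    congrDeriv_symmetrization_eq_zero_iff, Submodule.mem_span_singleton, Matrix.fromBlocks_smul,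
    Matrix.fromBlocks_inj, smul_zero]
  constructor
  · rintro ⟨⟨hNinit, hQinit, hPSinit⟩, hNtail, hQtail, hPStail⟩
    obtain ⟨s, hP, hS⟩ := exists_eq_smul_one_of_mul_add_mul_eq_zero hPSinit hPStail
    refine ⟨s, ?_, ?_, ?_, hS.symm⟩
    · rw [← Matrix.transpose_transpose P, hP]
      simp
    · exact (Matrix.transpose_eq_zero.mp (eq_zero_of_skew_mul_right hQinit hQtail)).symm
    · exact (eq_zero_of_skew_left_mul hNinit hNtail).symm
  · rintro ⟨s, rfl, rfl, rfl, rfl⟩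
    simp

theorem finrank_ker_congrDerivPair_symmetrization :
    Module.finrank ℂ (LinearMap.ker (congrDerivPair (symmetrization (initMatrix ℂ r))
      (symmetrization (tailMatrix ℂ r)))) = 1 := by
  rw [ker_congrDerivPair_symmetrization]
  refine finrank_span_singleton fun h => ?_
  simpa using congrFun₂ h (Sum.inr 0) (Sum.inr 0)

theorem linearIndependent_symmetrization (hr : 1 ≤ r) : LinearIndependent ℂ
    ![symmetrization (initMatrix ℂ r), symmetrization (tailMatrix ℂ r)] := by
  rw [LinearIndependent.pair_iff]
  intro a b hab
  let i : Fin r := ⟨0, hr⟩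
  have hinit := congrFun₂ hab (Sum.inl i) (Sum.inr i.castSucc)
  have htail := congrFun₂ hab (Sum.inl i) (Sum.inr i.succ)
  constructor
  · simpa [symmetrization, initMatrix, tailMatrix, Fin.ext_iff] using hinit
  · simpa [symmetrization, initMatrix, tailMatrix, Fin.ext_iff] using htail

theorem finrank_span_symmetrization (hr : 1 ≤ r) : Module.finrank ℂ (Submodule.span ℂ
    {symmetrization (initMatrix ℂ r), symmetrization (tailMatrix ℂ r)}) = 2 := by
  rw [← Matrix.range_cons_cons_empty _ _ ![],
    finrank_span_eq_card (linearIndependent_symmetrization hr), Fintype.card_fin]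

/-- The splitting of the index set `0, …, 2r` into the first `r` and the last `r + 1` indices. -/
def corankOneEquiv (r : ℕ) : Fin r ⊕ Fin (r + 1) ≃ Fin (2 * r + 1) :=
  finSumFinEquiv.trans (finCongr (by omega))

theorem corankOneEquiv_inl_val (i : Fin r) : (corankOneEquiv r (Sum.inl i) : ℕ) = i := by
  simp [corankOneEquiv]

theorem corankOneEquiv_inr_val (j : Fin (r + 1)) :
    (corankOneEquiv r (Sum.inr j) : ℕ) = r + j := by
  simp [corankOneEquiv]

theorem corankOneA_eq_reindex (r : ℕ) : corankOneA r =
    Matrix.reindex (corankOneEquiv r) (corankOneEquiv r) (symmetrization (initMatrix ℂ r)) := by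
  rw [← Equiv.symm_apply_eq]
  ext (i | i) (j | j) <;>
    simp only [corankOneA, symmetrization, initMatrix, Matrix.reindex_symm, Matrix.reindex_apply,
      Equiv.symm_symm, Matrix.submatrix_apply, Matrix.of_apply, Matrix.transpose_apply,
      Matrix.fromBlocks_apply₁₁, Matrix.fromBlocks_apply₁₂, Matrix.fromBlocks_apply₂₁,
      Matrix.fromBlocks_apply₂₂, Matrix.zero_apply, corankOneEquiv_inl_val,
      corankOneEquiv_inr_val, Fin.ext_iff, Fin.val_castSucc] <;>
    grind

theorem corankOneB_eq_reindex (r : ℕ) : corankOneB r =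
    Matrix.reindex (corankOneEquiv r) (corankOneEquiv r) (symmetrization (tailMatrix ℂ r)) := by
  rw [← Equiv.symm_apply_eq]
  ext (i | i) (j | j) <;>
    simp only [corankOneB, symmetrization, tailMatrix, Matrix.reindex_symm, Matrix.reindex_apply,
      Equiv.symm_symm, Matrix.submatrix_apply, Matrix.of_apply, Matrix.transpose_apply,
      Matrix.fromBlocks_apply₁₁, Matrix.fromBlocks_apply₁₂, Matrix.fromBlocks_apply₂₁,
      Matrix.fromBlocks_apply₂₂, Matrix.zero_apply, corankOneEquiv_inl_val,
      corankOneEquiv_inr_val, Fin.ext_iff, Fin.val_succ] <;>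
    grind

end CorankOne

/-- The Lie algebra of the stabilizer of the corank-one canonical
pencil of size `2r + 1` has dimension `5` over ℂ. -/
theorem corankOne_stabilizer_dim_five (r : ℕ) (hr : 1 ≤ r) :
    Module.finrank ℂ (stabAlg (corankOneA r) (corankOneB r)) = 5 := by
  rw [corankOneA_eq_reindex, corankOneB_eq_reindex, finrank_stabAlg_reindex,
    finrank_stabAlg_eq_add span_prod_span_le_range_congrDerivPair_symmetrization,
    finrank_span_symmetrization hr, finrank_ker_congrDerivPair_symmetrization]
end
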